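/- In P_n one has the relations: P_n·P_n ⊆ D_n, A_n·A_n = 0, D_n·D_n = 0, D_n·P_n ⊆ C_n, P_n·A_n ⊆ C_n, P_n·C_n ⊆ span{d_{ij}, e_{ij}}, C_n·P_n = 0, and P_n·(span{d_{ij}, e_{ij}}) ⊆ C_n. -/

import Mathlib

inductive PBasis (n : ℕ) : Type
  | a : Fin n → Fin n → PBasis n
  | b : Fin n → Fin n → PBasis n
  | c : Fin n → PBasis n
  | d : Fin n → Fin n → PBasis n
  | e : Fin n → Fin n → PBasis n
  deriving DecidableEq

abbrev Pn (F : Type*) [Field F] (n : ℕ) : Type _ := PBasis n →₀ F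

open PBasis in
noncomputable def mulB (F : Type*) [Field F] {n : ℕ} : PBasis n → PBasis n → Pn F n
  | a i j, c k => if k = i then Finsupp.single (d i j) 1 else 0
  | b i j, c k => if k = i then Finsupp.single (e i j) 1 else 0
  | a i j, e k l => if i = k ∧ j = l then Finsupp.single (c j) 1 else 0
  | e k l, a i j => if i = k ∧ j = l then Finsupp.single (c j) 1 else 0
  | b i j, d k l => if i = k ∧ j = l then -Finsupp.single (c j) 1 else 0
  | d k l, b i j => if i = k ∧ j = l then -Finsupp.single (c j) 1 else 0
  | _, _ => 0

noncomputable def mulLin (F : Type*) [Field F] {n : ℕ} :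
    Pn F n →ₗ[F] Pn F n →ₗ[F] Pn F n :=
  Finsupp.lift (Pn F n →ₗ[F] Pn F n) F (PBasis n)
    (fun u => Finsupp.lift (Pn F n) F (PBasis n) (fun v => mulB F u v))

noncomputable instance (F : Type*) [Field F] (n : ℕ) : Mul (Pn F n) :=
  ⟨fun x y => mulLin F x y⟩

noncomputable def Cspan (F : Type*) [Field F] (n : ℕ) : Submodule F (Pn F n) :=
  Submodule.span F (Set.range fun i => (Finsupp.single (PBasis.c i) 1 : Pn F n))

noncomputable def Aspan (F : Type*) [Field F] (n : ℕ) : Submodule F (Pn F n) :=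
  Submodule.span F {x : Pn F n | ∃ i j,
    x = Finsupp.single (PBasis.a i j) 1 ∨ x = Finsupp.single (PBasis.b i j) 1}

noncomputable def Cbarspan (F : Type*) [Field F] (n : ℕ) : Submodule F (Pn F n) :=
  Submodule.span F {x : Pn F n | ∃ i j,
    x = Finsupp.single (PBasis.d i j) 1 ∨ x = Finsupp.single (PBasis.e i j) 1}

noncomputable def Dspan (F : Type*) [Field F] (n : ℕ) : Submodule F (Pn F n) :=
  Submodule.span F {x : Pn F n | (∃ i, x = Finsupp.single (PBasis.c i) 1) ∨
    ∃ i j, x = Finsupp.single (PBasis.d i j) 1 ∨ x = Finsupp.single (PBasis.e i j) 1}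

/-! The algebra is the direct sum of the blocks `A = span{aᵢⱼ, bᵢⱼ}`, `C = span{cᵢ}` and
`C̄ = span{dᵢⱼ, eᵢⱼ}`, with `D = C ⊕ C̄`. Multiplication by `A` on the left sends `C` into `C̄` and
`C̄` into `C`, multiplication by `A` on the right sends `C̄` into `C` and annihilates `C`, and
`A·A = D·D = 0`. All the relations follow from this table by distributing products over sums of
blocks. -/

open Submodule

theorem map₂_span_span_le_iff {R M N P : Type*} [CommSemiring R] [AddCommMonoid M]
    [AddCommMonoid N] [AddCommMonoid P] [Module R M] [Module R N] [Module R P]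
    {f : M →ₗ[R] N →ₗ[R] P} {s : Set M} {t : Set N} {U : Submodule R P} :
    map₂ f (span R s) (span R t) ≤ U ↔ ∀ x ∈ s, ∀ y ∈ t, f x y ∈ U := by
  rw [map₂_span_span, span_le, Set.image2_subset_iff]
  rfl

section

variable (F : Type*) [Field F] {n : ℕ}

theorem mulLin_single_single (u v : PBasis n) :
    mulLin F (Finsupp.single u 1) (Finsupp.single v 1) = mulB F u v := by
  simp [mulLin]

theorem single_c_mem_Cspan (i : Fin n) : Finsupp.single (PBasis.c i) 1 ∈ Cspan F n :=
  subset_span ⟨i, rfl⟩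

theorem single_d_mem_Cbarspan (i j : Fin n) : Finsupp.single (PBasis.d i j) 1 ∈ Cbarspan F n :=
  subset_span ⟨i, j, .inl rfl⟩

theorem single_e_mem_Cbarspan (i j : Fin n) : Finsupp.single (PBasis.e i j) 1 ∈ Cbarspan F n :=
  subset_span ⟨i, j, .inr rfl⟩

variable (n)

theorem Cspan_sup_Cbarspan : Cspan F n ⊔ Cbarspan F n = Dspan F n := by
  rw [Cspan, Cbarspan, Dspan, ← span_union]
  congr 1
  ext x
  simp only [Set.mem_union, Set.mem_range, Set.mem_ofPred_eq, eq_comm]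

theorem Cspan_le_Dspan : Cspan F n ≤ Dspan F n :=
  le_sup_left.trans (Cspan_sup_Cbarspan F n).le

theorem Cbarspan_le_Dspan : Cbarspan F n ≤ Dspan F n :=
  le_sup_right.trans (Cspan_sup_Cbarspan F n).le

theorem Aspan_sup_Dspan : Aspan F n ⊔ Dspan F n = ⊤ := by
  rw [eq_top_iff, ← (Finsupp.basisSingleOne (R := F) (ι := PBasis n)).span_eq,
    Finsupp.coe_basisSingleOne, Aspan, Dspan, ← span_union]
  refine span_mono ?_
  rintro _ ⟨⟨i, j⟩ | ⟨i, j⟩ | i | ⟨i, j⟩ | ⟨i, j⟩, rfl⟩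
  · exact .inl ⟨i, j, .inl rfl⟩
  · exact .inl ⟨i, j, .inr rfl⟩
  · exact .inr (.inl ⟨i, rfl⟩)
  · exact .inr (.inr ⟨i, j, .inl rfl⟩)
  · exact .inr (.inr ⟨i, j, .inr rfl⟩)

theorem map₂_mulLin_Aspan_Aspan : map₂ (mulLin F) (Aspan F n) (Aspan F n) = ⊥ := by
  refine le_bot_iff.1 (map₂_span_span_le_iff.2 ?_)
  rintro _ ⟨i, j, rfl | rfl⟩ _ ⟨k, l, rfl | rfl⟩ <;> simp [mulLin_single_single, mulB]

theorem map₂_mulLin_Cspan_Aspan : map₂ (mulLin F) (Cspan F n) (Aspan F n) = ⊥ := by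
  refine le_bot_iff.1 (map₂_span_span_le_iff.2 ?_)
  rintro _ ⟨i, rfl⟩ _ ⟨k, l, rfl | rfl⟩ <;> simp [mulLin_single_single, mulB]

theorem map₂_mulLin_Dspan_Dspan : map₂ (mulLin F) (Dspan F n) (Dspan F n) = ⊥ := by
  refine le_bot_iff.1 (map₂_span_span_le_iff.2 ?_)
  rintro _ (⟨i, rfl⟩ | ⟨i, j, rfl | rfl⟩) _ (⟨k, rfl⟩ | ⟨k, l, rfl | rfl⟩) <;>
    simp [mulLin_single_single, mulB]

theorem map₂_mulLin_Aspan_Cspan_le :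
    map₂ (mulLin F) (Aspan F n) (Cspan F n) ≤ Cbarspan F n := by
  refine map₂_span_span_le_iff.2 ?_
  rintro _ ⟨i, j, rfl | rfl⟩ _ ⟨k, rfl⟩ <;>
    simp [mulLin_single_single, mulB, ite_mem, single_d_mem_Cbarspan, single_e_mem_Cbarspan]

theorem map₂_mulLin_Aspan_Cbarspan_le :
    map₂ (mulLin F) (Aspan F n) (Cbarspan F n) ≤ Cspan F n := by
  refine map₂_span_span_le_iff.2 ?_
  rintro _ ⟨i, j, rfl | rfl⟩ _ ⟨k, l, rfl | rfl⟩ <;>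
    simp [mulLin_single_single, mulB, ite_mem, single_c_mem_Cspan]

theorem map₂_mulLin_Cbarspan_Aspan_le :
    map₂ (mulLin F) (Cbarspan F n) (Aspan F n) ≤ Cspan F n := by
  refine map₂_span_span_le_iff.2 ?_
  rintro _ ⟨i, j, rfl | rfl⟩ _ ⟨k, l, rfl | rfl⟩ <;>
    simp [mulLin_single_single, mulB, ite_mem, single_c_mem_Cspan]

variable {F n} in
theorem map₂_mulLin_top_left_of_le_Dspan {U : Submodule F (Pn F n)} (hU : U ≤ Dspan F n) :
    map₂ (mulLin F) ⊤ U = map₂ (mulLin F) (Aspan F n) U := by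
  have hDU : map₂ (mulLin F) (Dspan F n) U = ⊥ :=
    le_bot_iff.1 ((map₂_le_map₂_right hU).trans (map₂_mulLin_Dspan_Dspan F n).le)
  rw [← Aspan_sup_Dspan, map₂_sup_left, hDU, sup_bot_eq]

variable {F n} in
theorem map₂_mulLin_top_right_of_le_Dspan {U : Submodule F (Pn F n)} (hU : U ≤ Dspan F n) :
    map₂ (mulLin F) U ⊤ = map₂ (mulLin F) U (Aspan F n) := by
  have hUD : map₂ (mulLin F) U (Dspan F n) = ⊥ :=
    le_bot_iff.1 ((map₂_le_map₂_left hU).trans (map₂_mulLin_Dspan_Dspan F n).le)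
  rw [← Aspan_sup_Dspan, map₂_sup_right, hUD, sup_bot_eq]

theorem map₂_mulLin_top_Cspan_le : map₂ (mulLin F) ⊤ (Cspan F n) ≤ Cbarspan F n :=
  (map₂_mulLin_top_left_of_le_Dspan (Cspan_le_Dspan F n)).trans_le
    (map₂_mulLin_Aspan_Cspan_le F n)

theorem map₂_mulLin_top_Cbarspan_le : map₂ (mulLin F) ⊤ (Cbarspan F n) ≤ Cspan F n :=
  (map₂_mulLin_top_left_of_le_Dspan (Cbarspan_le_Dspan F n)).trans_le
    (map₂_mulLin_Aspan_Cbarspan_le F n)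

theorem map₂_mulLin_Cspan_top : map₂ (mulLin F) (Cspan F n) ⊤ = ⊥ :=
  (map₂_mulLin_top_right_of_le_Dspan (Cspan_le_Dspan F n)).trans (map₂_mulLin_Cspan_Aspan F n)

theorem map₂_mulLin_Dspan_Aspan_le :
    map₂ (mulLin F) (Dspan F n) (Aspan F n) ≤ Cspan F n := by
  rw [← Cspan_sup_Cbarspan, map₂_sup_left, map₂_mulLin_Cspan_Aspan, bot_sup_eq]
  exact map₂_mulLin_Cbarspan_Aspan_le F n

theorem map₂_mulLin_Dspan_top_le : map₂ (mulLin F) (Dspan F n) ⊤ ≤ Cspan F n :=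
  (map₂_mulLin_top_right_of_le_Dspan le_rfl).trans_le (map₂_mulLin_Dspan_Aspan_le F n)

theorem map₂_mulLin_top_Aspan_le : map₂ (mulLin F) ⊤ (Aspan F n) ≤ Cspan F n := by
  rw [← Aspan_sup_Dspan, map₂_sup_left, map₂_mulLin_Aspan_Aspan, bot_sup_eq]
  exact map₂_mulLin_Dspan_Aspan_le F n

theorem map₂_mulLin_top_top_le : map₂ (mulLin F) ⊤ ⊤ ≤ Dspan F n := by
  have hA : map₂ (mulLin F) ⊤ (Aspan F n) ≤ Dspan F n :=
    (map₂_mulLin_top_Aspan_le F n).trans (Cspan_le_Dspan F n)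
  have hC : map₂ (mulLin F) ⊤ (Cspan F n) ≤ Dspan F n :=
    (map₂_mulLin_top_Cspan_le F n).trans (Cbarspan_le_Dspan F n)
  have hCbar : map₂ (mulLin F) ⊤ (Cbarspan F n) ≤ Dspan F n :=
    (map₂_mulLin_top_Cbarspan_le F n).trans (Cspan_le_Dspan F n)
  calc map₂ (mulLin F) ⊤ ⊤
      = map₂ (mulLin F) ⊤ (Aspan F n ⊔ (Cspan F n ⊔ Cbarspan F n)) := by
        rw [Cspan_sup_Cbarspan, Aspan_sup_Dspan]
    _ ≤ Dspan F n := by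
        rw [map₂_sup_right, map₂_sup_right]
        exact sup_le hA (sup_le hC hCbar)

variable {F n}

theorem mul_mem_of_map₂_mulLin_le {U V W : Submodule F (Pn F n)}
    (h : map₂ (mulLin F) U V ≤ W) {x y : Pn F n} (hx : x ∈ U) (hy : y ∈ V) : x * y ∈ W :=
  map₂_le.1 h x hx y hy

theorem mul_eq_zero_of_map₂_mulLin_eq_bot {U V : Submodule F (Pn F n)}
    (h : map₂ (mulLin F) U V = ⊥) {x y : Pn F n} (hx : x ∈ U) (hy : y ∈ V) : x * y = 0 :=
  (mem_bot F).1 (mul_mem_of_map₂_mulLin_le h.le hx hy)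

end

theorem stmt (F : Type*) [Field F] (n : ℕ) :
    (∀ x y : Pn F n, x * y ∈ Dspan F n) ∧
    (∀ x y : Pn F n, x ∈ Aspan F n → y ∈ Aspan F n → x * y = 0) ∧
    (∀ x y : Pn F n, x ∈ Dspan F n → y ∈ Dspan F n → x * y = 0) ∧
    (∀ x y : Pn F n, x ∈ Dspan F n → x * y ∈ Cspan F n) ∧
    (∀ x y : Pn F n, y ∈ Aspan F n → x * y ∈ Cspan F n) ∧
    (∀ x y : Pn F n, y ∈ Cspan F n → x * y ∈ Cbarspan F n) ∧
    (∀ x y : Pn F n, x ∈ Cspan F n → x * y = 0) ∧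
    (∀ x y : Pn F n, y ∈ Cbarspan F n → x * y ∈ Cspan F n) := by
  exact ⟨
    fun _ _ => mul_mem_of_map₂_mulLin_le (map₂_mulLin_top_top_le F n) mem_top mem_top,
    fun _ _ => mul_eq_zero_of_map₂_mulLin_eq_bot (map₂_mulLin_Aspan_Aspan F n),
    fun _ _ => mul_eq_zero_of_map₂_mulLin_eq_bot (map₂_mulLin_Dspan_Dspan F n),
    fun _ _ hx => mul_mem_of_map₂_mulLin_le (map₂_mulLin_Dspan_top_le F n) hx mem_top,
    fun _ _ => mul_mem_of_map₂_mulLin_le (map₂_mulLin_top_Aspan_le F n) mem_top,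
    fun _ _ => mul_mem_of_map₂_mulLin_le (map₂_mulLin_top_Cspan_le F n) mem_top,
    fun _ _ hx => mul_eq_zero_of_map₂_mulLin_eq_bot (map₂_mulLin_Cspan_top F n) hx mem_top,
    fun _ _ => mul_mem_of_map₂_mulLin_le (map₂_mulLin_top_Cbarspan_le F n) mem_top⟩
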